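/- arXiv:1608.02393 — 2 statements merged into one kernel-verified Lean document; each statement's English description precedes it below -/
import Mathlib

section
/- Let X and Y be metric spaces satisfying assumptions (A), let Ω ⊊ X be a bounded domain that is locally connected at the boundary, let D ⊊ Y be a bounded domain that is finitely connected at the boundary, and let f ∈ F(Ω, D). If [F_k] is a prime end in D, then the end [f⁻¹(F_k)] represented by the chain {f⁻¹(F_k)} is a singleton prime end in Ω. -/
open Set Metric Filter Bornology
open scoped ENNReal Topology

noncomputable section

/-- A metric space is doubling if there is `N` such that every ball of radius `r`
can be covered by at most `N` balls of radius `r/2`. -/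
def DoublingSpace (X : Type*) [MetricSpace X] : Prop :=
  ∃ N : ℕ, ∀ (x : X) (r : ℝ), ∃ t : Finset X,
    t.card ≤ N ∧ Metric.ball x r ⊆ ⋃ y ∈ t, Metric.ball y (r / 2)

/-- A metric space is quasiconvex if there is `C ≥ 1` such that any two points are
joined by a rectifiable curve of length at most `C · d(x,y)`. -/
def QuasiconvexSpace (X : Type*) [MetricSpace X] : Prop :=
  ∃ C : ℝ, 1 ≤ C ∧ ∀ x y : X, ∃ γ : ℝ → X,
    ContinuousOn γ (Set.Icc 0 1) ∧ γ 0 = x ∧ γ 1 = y ∧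
    eVariationOn γ (Set.Icc 0 1) ≤ ENNReal.ofReal (C * dist x y)

/-- Assumptions (A): complete, doubling and quasiconvex. -/
def AssumptionsA (X : Type*) [MetricSpace X] : Prop :=
  CompleteSpace X ∧ DoublingSpace X ∧ QuasiconvexSpace X

/-- A domain: a nonempty open connected subset. -/
def IsDomainIn {X : Type*} [MetricSpace X] (Ω : Set X) : Prop :=
  IsOpen Ω ∧ IsConnected Ω

/-- The inner diameter distance `dist_{M'}` between `E, F ⊆ Ω`: the infimum of diameters of
rectifiable curves in `Ω` joining `E` and `F` (the infimum of the empty set being `∞`). -/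
def innerDiamDist {X : Type*} [MetricSpace X] (Ω E F : Set X) : ℝ≥0∞ :=
  ⨅ (γ : ℝ → X) (_ : ContinuousOn γ (Set.Icc 0 1) ∧ γ '' Set.Icc 0 1 ⊆ Ω ∧
      eVariationOn γ (Set.Icc 0 1) < ⊤ ∧ γ 0 ∈ E ∧ γ 1 ∈ F),
    EMetric.diam (γ '' Set.Icc 0 1)

/-- The Mazurkiewicz distance `dist_M` between `A, B ⊆ Ω`: the infimum of diameters of
connected subsets of `Ω` meeting both `A` and `B`. -/
def mazDist {X : Type*} [MetricSpace X] (Ω A B : Set X) : ℝ≥0∞ :=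
  ⨅ (K : Set X) (_ : K ⊆ Ω ∧ IsConnected K ∧ (K ∩ A).Nonempty ∧ (K ∩ B).Nonempty),
    EMetric.diam K

/-- An acceptable set in a bounded domain `Ω`: a bounded connected proper subset of `Ω`
whose closure meets `∂Ω`. -/
def AcceptableIn {X : Type*} [MetricSpace X] (Ω E : Set X) : Prop :=
  Bornology.IsBounded E ∧ IsConnected E ∧ E ⊆ Ω ∧ E ≠ Ω ∧
    (closure E ∩ frontier Ω).Nonempty

/-- A chain in `Ω`. -/
def IsChainIn {X : Type*} [MetricSpace X] (Ω : Set X) (E : ℕ → Set X) : Prop :=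
  (∀ k, AcceptableIn Ω (E k)) ∧
  (∀ k, E (k + 1) ⊆ E k) ∧
  (∀ k, 0 < mazDist Ω (Ω ∩ frontier (E (k + 1))) (Ω ∩ frontier (E k))) ∧
  (⋂ k, closure (E k)) ⊆ frontier Ω

/-- The impression of a chain. -/
def impression {X : Type*} [MetricSpace X] (E : ℕ → Set X) : Set X :=
  ⋂ k, closure (E k)

/-- A chain `E` divides a chain `F` if every member of `F` contains some member of `E`. -/
def ChainDivides {X : Type*} (E F : ℕ → Set X) : Prop :=
  ∀ k, ∃ l, E l ⊆ F k

/-- Two chains are equivalent if they divide each other. -/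
def ChainEquiv {X : Type*} (E F : ℕ → Set X) : Prop :=
  ChainDivides E F ∧ ChainDivides F E

/-- A chain represents a prime end if every chain dividing it is equivalent to it. -/
def IsPrimeChain {X : Type*} [MetricSpace X] (Ω : Set X) (E : ℕ → Set X) : Prop :=
  IsChainIn Ω E ∧ ∀ F : ℕ → Set X, IsChainIn Ω F → ChainDivides F E → ChainDivides E F

/-- A chain represents a singleton prime end if moreover its impression is a single point. -/
def IsSingletonPrimeChain {X : Type*} [MetricSpace X] (Ω : Set X) (E : ℕ → Set X) : Prop :=
  IsPrimeChain Ω E ∧ ∃ x : X, impression E = {x}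

/-- The bounded turning condition (linear connectedness): any two distinct points of `Ω` lie in a
continuum contained in `Ω` of diameter at most `L` times their distance. -/
def BoundedTurning {X : Type*} [MetricSpace X] (Ω : Set X) : Prop :=
  ∃ L : ℝ, 1 ≤ L ∧ ∀ x ∈ Ω, ∀ y ∈ Ω, x ≠ y → ∃ K : Set X,
    K ⊆ Ω ∧ IsCompact K ∧ IsConnected K ∧ K.Nontrivial ∧ x ∈ K ∧ y ∈ K ∧
    Metric.diam K ≤ L * dist x y

/-- `Ω` is finitely connected at a boundary point `x`. -/
def FinitelyConnectedAt {X : Type*} [MetricSpace X] (Ω : Set X) (x : X) : Prop :=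
  ∀ r : ℝ, 0 < r → ∃ U : Set X, IsOpen U ∧ Bornology.IsBounded U ∧ x ∈ U ∧
    U ⊆ Metric.ball x r ∧
    {C : Set X | ∃ y ∈ U ∩ Ω, C = connectedComponentIn (U ∩ Ω) y}.Finite

/-- `Ω` is finitely connected at the boundary. -/
def FinitelyConnectedAtBoundary {X : Type*} [MetricSpace X] (Ω : Set X) : Prop :=
  ∀ x ∈ frontier Ω, FinitelyConnectedAt Ω x

/-- `Ω` is locally connected at a boundary point `x`. -/
def LocallyConnectedAt {X : Type*} [MetricSpace X] (Ω : Set X) (x : X) : Prop :=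
  ∀ r : ℝ, 0 < r → ∃ U : Set X, IsOpen U ∧ Bornology.IsBounded U ∧ x ∈ U ∧
    U ⊆ Metric.ball x r ∧ IsConnected (U ∩ Ω)

/-- `Ω` is locally connected at the boundary. -/
def LocallyConnectedAtBoundary {X : Type*} [MetricSpace X] (Ω : Set X) : Prop :=
  ∀ x ∈ frontier Ω, LocallyConnectedAt Ω x

/-- `f` is a homeomorphism of `Ω` onto `Ω'` with inverse `g`. -/
def IsHomeoBetween {X Y : Type*} [MetricSpace X] [MetricSpace Y] (f : X → Y) (g : Y → X)
    (Ω : Set X) (Ω' : Set Y) : Prop :=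
  ContinuousOn f Ω ∧ ContinuousOn g Ω' ∧ Set.MapsTo f Ω Ω' ∧ Set.MapsTo g Ω' Ω ∧
  (∀ x ∈ Ω, g (f x) = x) ∧ (∀ y ∈ Ω', f (g y) = y)

/-- The class `F(Ω, Ω')`: homeomorphisms such that for all connected `E, F ⊊ Ω`,
`dist_{M'}(E,F) = 0` iff `dist_{M'}(f(E), f(F)) = 0`. -/
def ClassF {X Y : Type*} [MetricSpace X] [MetricSpace Y] (Ω : Set X) (Ω' : Set Y)
    (f : X → Y) (g : Y → X) : Prop :=
  IsHomeoBetween f g Ω Ω' ∧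
  ∀ E F : Set X, E ⊆ Ω → E ≠ Ω → IsConnected E → F ⊆ Ω → F ≠ Ω → IsConnected F →
    (innerDiamDist Ω E F = 0 ↔ innerDiamDist Ω' (f '' E) (f '' F) = 0)

/-- The cluster set `C(f, x)` of `f : Ω → Y` at `x`. -/
def clusterSetOn {X Y : Type*} [MetricSpace X] [MetricSpace Y] (f : X → Y) (Ω : Set X)
    (x : X) : Set Y :=
  ⋂ U ∈ 𝓝 x, closure (f '' (U ∩ Ω))



section Aux

variable {X Y : Type*} [MetricSpace X] [MetricSpace Y]

lemma aux_tb (h : DoublingSpace X) {S : Set X} (hS : Bornology.IsBounded S) :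
    TotallyBounded S := by
  obtain ⟨N, hN⟩ := h
  rcases isEmpty_or_nonempty X with hE | ⟨⟨x⟩⟩
  · rw [Set.eq_empty_of_isEmpty S]; exact totallyBounded_empty
  obtain ⟨r, hr⟩ := hS.subset_ball x
  refine TotallyBounded.subset hr ?_
  have key : ∀ n : ℕ, ∃ t : Set X, t.Finite ∧ ball x r ⊆ ⋃ y ∈ t, ball y (r / 2 ^ n) := by
    intro n
    induction n with
    | zero => exact ⟨{x}, Set.finite_singleton x, by simp⟩
    | succ n ih =>
      obtain ⟨t, ht, hc⟩ := ih
      choose s hs1 hs2 using fun y => hN y (r / 2 ^ n)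
      refine ⟨⋃ y ∈ t, (s y : Set X), ht.biUnion fun y _ => (s y).finite_toSet, ?_⟩
      intro z hz
      obtain ⟨y, hy, hzy⟩ := Set.mem_iUnion₂.1 (hc hz)
      obtain ⟨w, hw, hzw⟩ := Set.mem_iUnion₂.1 (hs2 y hzy)
      refine Set.mem_iUnion₂.2 ⟨w, Set.mem_iUnion₂.2 ⟨y, hy, hw⟩, ?_⟩
      rwa [div_div, ← pow_succ] at hzw
  rw [Metric.totallyBounded_iff]
  intro ε hε
  have : Tendsto (fun n : ℕ => r * (1 / 2 : ℝ) ^ n) atTop (𝓝 (r * 0)) :=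
    (tendsto_pow_atTop_nhds_zero_of_lt_one (by norm_num) (by norm_num)).const_mul r
  rw [mul_zero] at this
  obtain ⟨n, hn⟩ := (this.eventually_lt_const hε).exists
  obtain ⟨t, ht, hc⟩ := key n
  refine ⟨t, ht, hc.trans (Set.iUnion₂_mono fun y _ => ball_subset_ball ?_)⟩
  have : r / 2 ^ n = r * (1 / 2 : ℝ) ^ n := by
    rw [one_div, inv_pow, div_eq_mul_inv]
  rw [this]; exact hn.le

lemma aux_compact (h : AssumptionsA X) {S : Set X} (hS : Bornology.IsBounded S) :
    IsCompact (closure S) := by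
  obtain ⟨h1, h2, -⟩ := h
  exact (aux_tb h2 hS).closure.isCompact_of_isComplete isClosed_closure.isComplete

/-- rectifiable joinability in `W` -/
def RJ (W : Set X) (a b : X) : Prop :=
  ∃ γ : ℝ → X, ContinuousOn γ (Set.Icc 0 1) ∧ γ '' Set.Icc 0 1 ⊆ W ∧
      eVariationOn γ (Set.Icc 0 1) < ⊤ ∧ γ 0 = a ∧ γ 1 = b

lemma RJ.symm {W : Set X} {a b : X} (h : RJ W a b) : RJ W b a := by
  obtain ⟨γ, h1, h2, h3, h4, h5⟩ := h
  have hm : Set.MapsTo (fun t : ℝ => 1 - t) (Set.Icc 0 1) (Set.Icc 0 1) := by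
    intro t ht; simp only [Set.mem_Icc] at *; constructor <;> linarith [ht.1, ht.2]
  refine ⟨γ ∘ fun t => 1 - t, h1.comp (by fun_prop) hm, ?_, ?_, by simp [h5], by simp [h4]⟩
  · rw [Set.image_comp]; exact (Set.image_mono hm.image_subset).trans h2
  · refine (eVariationOn.comp_le_of_antitoneOn γ _ ?_ hm).trans_lt h3
    intro s _ t _ hst; simp only; linarith

lemma RJ.trans {W : Set X} {a b c : X} (h : RJ W a b) (h' : RJ W b c) : RJ W a c := by
  obtain ⟨γ, h1, h2, h3, h4, h5⟩ := h
  obtain ⟨δ, k1, k2, k3, k4, k5⟩ := h'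
  set η : ℝ → X := fun t => if t ≤ 1/2 then γ (2*t) else δ (2*t-1) with hη
  have m1 : Set.MapsTo (fun t : ℝ => 2*t) (Set.Icc 0 (1/2)) (Set.Icc 0 1) := by
    intro t ht; simp only [Set.mem_Icc] at *; constructor <;> linarith [ht.1, ht.2]
  have m2 : Set.MapsTo (fun t : ℝ => 2*t-1) (Set.Icc (1/2) 1) (Set.Icc 0 1) := by
    intro t ht; simp only [Set.mem_Icc] at *; constructor <;> linarith [ht.1, ht.2]
  have e1 : Set.EqOn η (γ ∘ fun t => 2*t) (Set.Icc 0 (1/2)) := by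
    intro t ht; simp only [hη, if_pos ht.2, Function.comp]
  have e2 : Set.EqOn η (δ ∘ fun t => 2*t-1) (Set.Icc (1/2) 1) := by
    intro t ht
    rcases eq_or_lt_of_le ht.1 with h | h
    · subst h; simp [hη, h5, k4]
    · simp only [hη, if_neg (not_le.2 h), Function.comp]
  have hu : Set.Icc (0:ℝ) 1 = Set.Icc 0 (1/2) ∪ Set.Icc (1/2) 1 :=
    (Set.Icc_union_Icc_eq_Icc (by norm_num) (by norm_num)).symm
  have c1 : ContinuousOn η (Set.Icc 0 (1/2)) := (h1.comp (by fun_prop) m1).congr e1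
  have c2 : ContinuousOn η (Set.Icc (1/2) 1) := (k1.comp (by fun_prop) m2).congr e2
  refine ⟨η, ?_, ?_, ?_, ?_, ?_⟩
  · rw [hu]; exact c1.union_of_isClosed c2 isClosed_Icc isClosed_Icc
  · rw [hu, Set.image_union, e1.image_eq, e2.image_eq, Set.image_comp, Set.image_comp δ]
    exact Set.union_subset ((Set.image_mono m1.image_subset).trans h2)
      ((Set.image_mono m2.image_subset).trans k2)
  · have := eVariationOn.Icc_add_Icc η (s := Set.univ) (a := 0) (b := 1/2) (c := 1)
      (by norm_num) (by norm_num) trivial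
    simp only [Set.univ_inter] at this
    rw [← this, eVariationOn.congr e1, eVariationOn.congr e2]
    refine ENNReal.add_lt_top.2 ⟨?_, ?_⟩
    · refine (eVariationOn.comp_le_of_monotoneOn γ _ ?_ m1).trans_lt h3
      intro s _ t _ hst; simp only; linarith
    · refine (eVariationOn.comp_le_of_monotoneOn δ _ ?_ m2).trans_lt k3
      intro s _ t _ hst; simp only; linarith
  · rw [e1 (by norm_num)]; simp [h4]
  · rw [e2 (by norm_num)]; simp only [Function.comp]; norm_num [k5]

lemma aux_rj (h : QuasiconvexSpace X) {W K : Set X} (hW : IsOpen W) (hKW : K ⊆ W)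
    (hK : IsPreconnected K) {a b : X} (ha : a ∈ K) (hb : b ∈ K) : RJ W a b := by
  refine hK.induction₂ (RJ W) ?_ (fun _ _ _ _ _ _ => RJ.trans) (fun _ _ _ _ => RJ.symm) ha hb
  intro x hx
  obtain ⟨C, hC, hq⟩ := h
  obtain ⟨r, hr, hrW⟩ := Metric.isOpen_iff.1 hW x (hKW hx)
  refine mem_nhdsWithin_of_mem_nhds ?_
  filter_upwards [Metric.ball_mem_nhds x (show 0 < r / C by positivity)] with y hy
  obtain ⟨γ, h1, h2, h3, h4⟩ := hq x y
  refine ⟨γ, h1, ?_, h4.trans_lt ENNReal.ofReal_lt_top, h2, h3⟩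
  rintro _ ⟨t, ht, rfl⟩
  apply hrW
  have := (eVariationOn.edist_le γ ht (show (0:ℝ) ∈ Set.Icc 0 1 by simp)).trans h4
  rw [h2, edist_dist] at this
  have h5 := (ENNReal.ofReal_le_ofReal_iff (by positivity)).1 this
  rw [mem_ball, dist_comm, lt_div_iff₀ (by positivity)] at hy
  rw [mem_ball]; linarith

lemma maz_le {Ω A B K : Set X} (h1 : K ⊆ Ω) (h2 : IsConnected K) (h3 : (K ∩ A).Nonempty)
    (h4 : (K ∩ B).Nonempty) : mazDist Ω A B ≤ Metric.ediam K :=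
  iInf₂_le K ⟨h1, h2, h3, h4⟩

lemma maz_lt {Ω A B : Set X} {ε : ℝ≥0∞} (h : mazDist Ω A B < ε) :
    ∃ K ⊆ Ω, IsConnected K ∧ (K ∩ A).Nonempty ∧ (K ∩ B).Nonempty ∧ Metric.ediam K < ε := by
  unfold mazDist at h
  obtain ⟨K, hK⟩ := iInf_lt_iff.1 h
  obtain ⟨⟨h1, h2, h3, h4⟩, h5⟩ := iInf_lt_iff.1 hK
  exact ⟨K, h1, h2, h3, h4, h5⟩

lemma inner_eq_maz (h : QuasiconvexSpace X) {Ω : Set X} (hΩ : IsOpen Ω) (A B : Set X) :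
    innerDiamDist Ω A B = mazDist Ω A B := by
  apply le_antisymm
  · refine le_iInf₂ ?_
    rintro K ⟨h1, h2, ⟨a, haK, haA⟩, ⟨b, hbK, hbB⟩⟩
    change _ ≤ Metric.ediam K
    refine ENNReal.le_of_forall_pos_le_add ?_
    intro ε' hε' _
    rw [← ENNReal.ofReal_coe_nnreal]
    have hε : 0 < (ε' : ℝ) := by exact_mod_cast hε'
    generalize (ε' : ℝ) = ε at hε
    have hW : IsOpen (Ω ∩ Metric.thickening (ε/2) K) := hΩ.inter isOpen_thickening
    obtain ⟨γ, g1, g2, g3, g4, g5⟩ := aux_rj h hW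
      (Set.subset_inter h1 (self_subset_thickening (half_pos hε) K)) h2.isPreconnected haK hbK
    refine (iInf₂_le γ ⟨g1, g2.trans Set.inter_subset_left, g3, g4 ▸ haA, g5 ▸ hbB⟩).trans ?_
    refine (Metric.ediam_mono (g2.trans Set.inter_subset_right)).trans ?_
    refine Metric.ediam_le fun x hx y hy => ?_
    obtain ⟨x', hx', hxx⟩ := mem_thickening_iff.1 hx
    obtain ⟨y', hy', hyy⟩ := mem_thickening_iff.1 hy
    have t1 : edist x x' ≤ ENNReal.ofReal (ε/2) := by
      rw [edist_dist]; exact ENNReal.ofReal_le_ofReal hxx.le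
    have t2 : edist y' y ≤ ENNReal.ofReal (ε/2) := by
      rw [edist_dist, dist_comm]; exact ENNReal.ofReal_le_ofReal hyy.le
    have t3 := Metric.edist_le_ediam_of_mem hx' hy'
    have t4 : ENNReal.ofReal ε = ENNReal.ofReal (ε/2) + ENNReal.ofReal (ε/2) := by
      rw [← ENNReal.ofReal_add (by positivity) (by positivity)]; simp
    calc edist x y ≤ edist x x' + edist x' y' + edist y' y := edist_triangle4 _ _ _ _
      _ ≤ ENNReal.ofReal (ε/2) + Metric.ediam K + ENNReal.ofReal (ε/2) := by gcongr
      _ = _ := by rw [t4]; ring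
  · refine le_iInf₂ ?_
    rintro γ ⟨g1, g2, g3, g4, g5⟩
    refine maz_le g2 ((isConnected_Icc zero_le_one).image _ g1) ⟨γ 0, ⟨0, by simp, rfl⟩, g4⟩
      ⟨γ 1, ⟨1, by simp, rfl⟩, g5⟩

lemma maz_zero_seq {Ω A B : Set X} (h : mazDist Ω A B = 0) :
    ∃ p q : ℕ → X, (∀ n, p n ∈ Ω ∩ A) ∧ (∀ n, q n ∈ Ω ∩ B) ∧
      (∀ n, ∃ K ⊆ Ω, IsConnected K ∧ p n ∈ K ∧ q n ∈ K ∧ Metric.ediam K < ((n:ℝ≥0∞) + 1)⁻¹) ∧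
      Tendsto (fun n => dist (p n) (q n)) atTop (𝓝 0) := by
  have : ∀ n : ℕ, ∃ K ⊆ Ω, IsConnected K ∧ (K ∩ A).Nonempty ∧ (K ∩ B).Nonempty ∧
      Metric.ediam K < ((n:ℝ≥0∞) + 1)⁻¹ := fun n => maz_lt (by
    rw [h]; exact ENNReal.inv_pos.2 (by finiteness))
  choose K h1 h2 h3 h4 h5 using this
  choose p hp using h3
  choose q hq using h4
  refine ⟨p, q, fun n => ⟨h1 n (hp n).1, (hp n).2⟩, fun n => ⟨h1 n (hq n).1, (hq n).2⟩,
    fun n => ⟨K n, h1 n, h2 n, (hp n).1, (hq n).1, h5 n⟩, ?_⟩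
  refine squeeze_zero (fun _ => dist_nonneg) (fun n => ?_) tendsto_one_div_add_atTop_nhds_zero_nat
  have := (Metric.edist_le_ediam_of_mem (hp n).1 (hq n).1).trans (h5 n).le
  have e : ((n:ℝ≥0∞) + 1)⁻¹ = ENNReal.ofReal (1 / ((n:ℝ) + 1)) := by
    rw [one_div, ENNReal.ofReal_inv_of_pos (by positivity), ENNReal.ofReal_add (by positivity)
      (by norm_num)]; simp
  rw [e, edist_dist] at this
  exact (ENNReal.ofReal_le_ofReal_iff (by positivity)).1 this

lemma maz_zero_of {Ω A B : Set X} (h : ∀ n : ℕ, ∃ K ⊆ Ω, IsConnected K ∧ (K ∩ A).Nonempty ∧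
    (K ∩ B).Nonempty ∧ Metric.ediam K < ((n:ℝ≥0∞) + 1)⁻¹) : mazDist Ω A B = 0 := by
  by_contra hne
  obtain ⟨n, hn⟩ := ENNReal.exists_inv_nat_lt hne
  obtain ⟨K, h1, h2, h3, h4, h5⟩ := h n
  have := (maz_le h1 h2 h3 h4).trans_lt h5
  refine absurd (this.trans_le ?_) (not_lt.2 hn.le)
  exact ENNReal.inv_le_inv.2 le_self_add

lemma ediam_le_ball {K : Set X} {x : X} {r : ℝ} (h : K ⊆ ball x r) (hr : 0 < r) :
    Metric.ediam K ≤ ENNReal.ofReal (2 * r) := by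
  refine Metric.ediam_le fun y hy z hz => ?_
  rw [edist_dist]
  apply ENNReal.ofReal_le_ofReal
  have h1 := h hy
  have h2 := h hz
  rw [mem_ball] at h1 h2
  linarith [dist_triangle_right y z x]

lemma maz_zero_lc {Ω A B : Set X} {x : X} (h : LocallyConnectedAt Ω x) (hA : A ⊆ Ω) (hB : B ⊆ Ω)
    (hxA : x ∈ closure A) (hxB : x ∈ closure B) : mazDist Ω A B = 0 := by
  by_contra hne
  obtain ⟨c, hc0, hc⟩ := ENNReal.lt_iff_exists_nnreal_btwn.1 (pos_iff_ne_zero.2 hne)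
  have hc0 : 0 < (c:ℝ) := by exact_mod_cast hc0
  obtain ⟨U, h1, h2, h3, h4, h5⟩ := h (c/2) (by positivity)
  have hm : ∀ A ⊆ Ω, x ∈ closure A → ((U ∩ Ω) ∩ A).Nonempty := fun A hA hx => by
    obtain ⟨a, haU, haA⟩ := mem_closure_iff.1 hx U h1 h3
    exact ⟨a, ⟨haU, hA haA⟩, haA⟩
  have := maz_le Set.inter_subset_right h5 (hm A hA hxA) (hm B hB hxB)
  have h6 := this.trans (ediam_le_ball (Set.inter_subset_left.trans h4) (by positivity))
  rw [mul_div_cancel₀ _ (by norm_num), ENNReal.ofReal_coe_nnreal] at h6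
  exact absurd hc (not_lt.2 h6)

lemma meets_frontier {K S : Set X} (hK : IsPreconnected K) (h1 : (K ∩ S).Nonempty)
    (h2 : (K \ S).Nonempty) : (K ∩ frontier S).Nonempty := by
  by_contra hne
  have hd : ∀ z ∈ K, z ∉ frontier S := fun z hz hf => hne ⟨z, hz, hf⟩
  obtain ⟨a, haK, haS⟩ := h1
  obtain ⟨b, hbK, hbS⟩ := h2
  have hi : ∀ z ∈ K, z ∈ S → z ∈ interior S := fun z hz hS => by
    by_contra hn; exact hd z hz ⟨subset_closure hS, hn⟩
  have he : ∀ z ∈ K, z ∉ S → z ∈ (closure S)ᶜ := fun z hz hS hc =>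
    hd z hz ⟨hc, fun h => hS (interior_subset h)⟩
  obtain ⟨z, -, hz1, hz2⟩ := hK (interior S) (closure S)ᶜ isOpen_interior
    isClosed_closure.isOpen_compl (fun z hz => by
      by_cases h : z ∈ S
      · exact Or.inl (hi z hz h)
      · exact Or.inr (he z hz h)) ⟨a, haK, hi a haK haS⟩ ⟨b, hbK, he b hbK hbS⟩
  exact hz2 (subset_closure (interior_subset hz1))

lemma mem_cl_diff {D S : Set X} (hD : IsOpen D) {p : X} (hp : p ∈ D) (h : p ∈ frontier S) :
    p ∈ closure (D \ S) := by
  rw [frontier_eq_closure_inter_closure] at h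
  exact hD.inter_closure ⟨hp, h.2⟩

lemma mem_fr {D S : Set X} {p : X} (h : p ∈ closure S) (h' : p ∈ closure (D \ S)) :
    p ∈ frontier S := by
  rw [frontier_eq_closure_inter_closure]
  exact ⟨h, closure_mono (fun _ hx => hx.2) h'⟩

lemma IsHomeoBetween.symm' {f : X → Y} {g : Y → X} {Ω : Set X} {D : Set Y}
    (h : IsHomeoBetween f g Ω D) : IsHomeoBetween g f D Ω :=
  ⟨h.2.1, h.1, h.2.2.2.1, h.2.2.1, h.2.2.2.2.2, h.2.2.2.2.1⟩

section homeo
variable {f : X → Y} {g : Y → X} {Ω : Set X} {D : Set Y}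

lemma hm_cl (h : IsHomeoBetween f g Ω D) {S : Set X} (hS : S ⊆ Ω) {p : X} (hp : p ∈ Ω)
    (hpS : p ∈ closure S) : f p ∈ closure (f '' S) :=
  ((h.1 p hp).mono hS).mem_closure_image hpS

lemma hm_img (h : IsHomeoBetween f g Ω D) {S : Set X} (hS : S ⊆ Ω) : g '' (f '' S) = S := by
  rw [Set.image_image]
  have : Set.EqOn (fun x => g (f x)) id S := fun x hx => h.2.2.2.2.1 x (hS hx)
  rw [this.image_eq, Set.image_id]

lemma hm_diff (h : IsHomeoBetween f g Ω D) {S : Set X} (hS : S ⊆ Ω) :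
    f '' (Ω \ S) ⊆ D \ f '' S := by
  rintro _ ⟨x, ⟨hx, hxS⟩, rfl⟩
  refine ⟨h.2.2.1 hx, ?_⟩
  rintro ⟨z, hz, hzx⟩
  have := congrArg g hzx
  rw [h.2.2.2.2.1 z (hS hz), h.2.2.2.2.1 x hx] at this
  exact hxS (this ▸ hz)

lemma hm_fr (h : IsHomeoBetween f g Ω D) (hΩ : IsOpen Ω) {S : Set X} (hS : S ⊆ Ω) {p : X}
    (hp : p ∈ Ω ∩ frontier S) : f p ∈ D ∩ frontier (f '' S) := by
  refine ⟨h.2.2.1 hp.1, mem_fr (D := D) (hm_cl h hS hp.1 hp.2.1) ?_⟩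
  exact closure_mono (hm_diff h hS) (hm_cl h Set.diff_subset hp.1 (mem_cl_diff hΩ hp.1 hp.2))

lemma hm_ne (h : IsHomeoBetween f g Ω D) {S : Set X} (hS : S ⊆ Ω) (hne : S ≠ Ω) :
    f '' S ⊆ D ∧ f '' S ≠ D := by
  refine ⟨(h.2.2.1.mono_left hS).image_subset, fun he => hne (hS.antisymm ?_)⟩
  intro x hx
  by_contra hxS
  have := hm_diff h hS ⟨x, ⟨hx, hxS⟩, rfl⟩
  exact this.2 (he ▸ this.1)

/-- sequence leaving the domain -/
lemma hm_lim (h : IsHomeoBetween f g Ω D) {p : ℕ → X} (hp : ∀ n, p n ∈ Ω) {x : X} {y : Y}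
    (hx : x ∈ Ω) (h1 : Tendsto p atTop (𝓝 x)) (h2 : Tendsto (fun n => f (p n)) atTop (𝓝 y)) :
    y = f x := by
  refine tendsto_nhds_unique h2 ?_
  exact (h.1 x hx).tendsto.comp (tendsto_nhdsWithin_iff.2 ⟨h1, Eventually.of_forall hp⟩)

lemma hm_acc (h : IsHomeoBetween f g Ω D) (hΩ : IsOpen Ω) (hD : IsOpen D)
    (hcD : IsCompact (closure D)) (hbD : Bornology.IsBounded D)
    {S : Set X} (hS : AcceptableIn Ω S) : AcceptableIn D (f '' S) := by
  obtain ⟨h1, h2, h3, h4, x, hx1, hx2⟩ := hS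
  obtain ⟨k1, k2⟩ := hm_ne h h3 h4
  refine ⟨hbD.subset k1, h2.image f (h.1.mono h3), k1, k2, ?_⟩
  obtain ⟨p, hp, hpx⟩ := mem_closure_iff_seq_limit.1 hx1
  obtain ⟨y, hy, φ, hφ, hlim⟩ := hcD.tendsto_subseq
    (x := fun n => f (p n)) (fun n => subset_closure (k1 ⟨p n, hp n, rfl⟩))
  refine ⟨y, mem_closure_of_tendsto hlim (Eventually.of_forall fun n => ⟨_, hp _, rfl⟩), ?_⟩
  rw [hD.frontier_eq]
  refine ⟨hy, fun hyD => ?_⟩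
  have : x = g y := hm_lim h.symm' (p := fun n => f (p (φ n)))
    (fun n => k1 ⟨_, hp _, rfl⟩) hyD hlim (by
      have e : (fun n => g (f (p (φ n)))) = p ∘ φ := by
        funext n; exact h.2.2.2.2.1 _ (h3 (hp _))
      rw [e]; exact hpx.comp hφ.tendsto_atTop)
  rw [hΩ.frontier_eq] at hx2
  exact hx2.2 (this ▸ h.2.2.2.1 hyD)

lemma hm_imp (h : IsHomeoBetween f g Ω D) (hΩ : IsOpen Ω) (hD : IsOpen D)
    {S : ℕ → Set X} (hS : ∀ k, S k ⊆ Ω) (hi : (⋂ k, closure (S k)) ⊆ frontier Ω) :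
    (⋂ k, closure (f '' S k)) ⊆ frontier D := by
  intro y hy
  rw [Set.mem_iInter] at hy
  rw [hD.frontier_eq]
  have hk : ∀ k, f '' S k ⊆ D := fun k => (h.2.2.1.mono_left (hS k)).image_subset
  refine ⟨closure_mono (hk 0) (hy 0), fun hyD => ?_⟩
  have : g y ∈ frontier Ω := hi (Set.mem_iInter.2 fun k => by
    have := hm_cl h.symm' (hk k) hyD (hy k)
    rwa [hm_img h (hS k)] at this)
  rw [hΩ.frontier_eq] at this
  exact this.2 (h.2.2.2.1 hyD)

/-- chains map forward, from the locally connected side -/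
lemma maz_fwd (h : IsHomeoBetween f g Ω D) (hΩ : IsOpen Ω) (hD : IsOpen D)
    (hcΩ : IsCompact (closure Ω)) (hlc : LocallyConnectedAtBoundary Ω)
    (hF : ∀ E F : Set X, E ⊆ Ω → E ≠ Ω → IsConnected E → F ⊆ Ω → F ≠ Ω → IsConnected F →
      (mazDist Ω E F = 0 ↔ mazDist D (f '' E) (f '' F) = 0))
    {S T : Set X} (hS : S ⊆ Ω) (hT : T ⊆ Ω)
    (hm : 0 < mazDist Ω (Ω ∩ frontier S) (Ω ∩ frontier T)) :
    0 < mazDist D (D ∩ frontier (f '' S)) (D ∩ frontier (f '' T)) := by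
  rw [pos_iff_ne_zero]
  intro hz
  obtain ⟨p, q, hp, hq, hK, hpq⟩ := maz_zero_seq hz
  have hSD : f '' S ⊆ D := (h.2.2.1.mono_left hS).image_subset
  have hTD : f '' T ⊆ D := (h.2.2.1.mono_left hT).image_subset
  have gp : ∀ n, g (p n) ∈ Ω ∩ frontier S := fun n => by
    have := hm_fr h.symm' hD hSD (hp n).2
    rwa [hm_img h hS] at this
  have gq : ∀ n, g (q n) ∈ Ω ∩ frontier T := fun n => by
    have := hm_fr h.symm' hD hTD (hq n).2
    rwa [hm_img h hT] at this
  have fgp : ∀ n, f (g (p n)) = p n := fun n => h.2.2.2.2.2 _ (hp n).1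
  have fgq : ∀ n, f (g (q n)) = q n := fun n => h.2.2.2.2.2 _ (hq n).1
  obtain ⟨⟨x, y⟩, hxy, φ, hφ, hlim⟩ := (hcΩ.prod hcΩ).tendsto_subseq
    (x := fun n => (g (p n), g (q n))) (fun n => ⟨subset_closure (gp n).1, subset_closure (gq n).1⟩)
  have hlx : Tendsto (fun n => g (p (φ n))) atTop (𝓝 x) :=
    (continuous_fst.tendsto _).comp hlim
  have hly : Tendsto (fun n => g (q (φ n))) atTop (𝓝 y) :=
    (continuous_snd.tendsto _).comp hlim
  have hpq' : Tendsto (fun n => dist (p (φ n)) (q (φ n))) atTop (𝓝 0) :=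
    hpq.comp hφ.tendsto_atTop
  have hlcl : x ∈ closure (Ω ∩ frontier S) :=
    mem_closure_of_tendsto hlx (Eventually.of_forall fun n => gp _)
  have hlcl' : y ∈ closure (Ω ∩ frontier T) :=
    mem_closure_of_tendsto hly (Eventually.of_forall fun n => gq _)
  -- interior case
  have hint : x ∈ Ω ∨ y ∈ Ω → x = y ∧ x ∈ Ω := by
    rintro (hx | hy)
    · have h1 : Tendsto (fun n => p (φ n)) atTop (𝓝 (f x)) := by
        have := (h.1 x hx).tendsto.comp
          (tendsto_nhdsWithin_iff.2 ⟨hlx, Eventually.of_forall fun n => (gp _).1⟩)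
        simpa only [Function.comp_def, fgp] using this
      have h2 : Tendsto (fun n => q (φ n)) atTop (𝓝 (f x)) :=
        (tendsto_iff_of_dist hpq').1 h1
      have : y = g (f x) := hm_lim h.symm' (fun n => (hq _).1) (h.2.2.1 hx) h2 hly
      rw [h.2.2.2.2.1 x hx] at this
      exact ⟨this.symm, hx⟩
    · have h1 : Tendsto (fun n => q (φ n)) atTop (𝓝 (f y)) := by
        have := (h.1 y hy).tendsto.comp
          (tendsto_nhdsWithin_iff.2 ⟨hly, Eventually.of_forall fun n => (gq _).1⟩)
        simpa only [Function.comp_def, fgq] using this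
      have h2 : Tendsto (fun n => p (φ n)) atTop (𝓝 (f y)) :=
        (tendsto_iff_of_dist hpq').2 h1
      have : x = g (f y) := hm_lim h.symm' (fun n => (hp _).1) (h.2.2.1 hy) h2 hlx
      rw [h.2.2.2.2.1 y hy] at this
      exact ⟨this, this ▸ hy⟩
  by_cases hcase : x ∈ Ω ∨ y ∈ Ω
  · obtain ⟨e, hx⟩ := hint hcase
    subst e
    have a1 : x ∈ frontier S :=
      isClosed_frontier.closure_subset_iff.2 Set.inter_subset_right hlcl
    have a2 : x ∈ frontier T :=
      isClosed_frontier.closure_subset_iff.2 Set.inter_subset_right hlcl'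
    have := maz_le (Set.singleton_subset_iff.2 hx) isConnected_singleton
      (A := Ω ∩ frontier S) (B := Ω ∩ frontier T) ⟨x, rfl, hx, a1⟩ ⟨x, rfl, hx, a2⟩
    rw [Metric.ediam_singleton] at this
    exact absurd hm (not_lt.2 this)
  · push Not at hcase
    have bx : x ∈ frontier Ω := by rw [hΩ.frontier_eq]; exact ⟨hxy.1, hcase.1⟩
    have bY : y ∈ frontier Ω := by rw [hΩ.frontier_eq]; exact ⟨hxy.2, hcase.2⟩
    by_cases e : x = y
    · subst e
      exact hm.ne' (maz_zero_lc (hlc x bx) Set.inter_subset_left Set.inter_subset_left hlcl hlcl')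
    · have hd : 0 < dist x y := dist_pos.2 e
      obtain ⟨U, u1, -, u3, u4, u5⟩ := hlc x bx (dist x y / 4) (by positivity)
      obtain ⟨V, v1, -, v3, v4, v5⟩ := hlc y bY (dist x y / 4) (by positivity)
      have far : ∀ a ∈ U, ∀ b ∈ V, dist x y / 2 ≤ dist a b := by
        intro a ha b hb
        have h1 := u4 ha
        have h2 := v4 hb
        rw [mem_ball] at h1 h2
        have := dist_triangle4 x a b y
        rw [dist_comm x a] at this
        linarith
      have neU : U ∩ Ω ≠ Ω := by
        intro he
        obtain ⟨b, hb, hbΩ⟩ := v5.nonempty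
        have hbU : b ∈ U := by rw [← he] at hbΩ; exact hbΩ.1
        have := far b hbU b hb
        rw [dist_self] at this; linarith
      have neV : V ∩ Ω ≠ Ω := by
        intro he
        obtain ⟨b, hb, hbΩ⟩ := u5.nonempty
        have hbU : b ∈ V := by rw [← he] at hbΩ; exact hbΩ.1
        have := far b hb b hbU
        rw [dist_self] at this; linarith
      have hzero : mazDist D (f '' (U ∩ Ω)) (f '' (V ∩ Ω)) = 0 := by
        apply maz_zero_of
        intro n
        obtain ⟨m, m1, m2, m3⟩ := ((hlx.eventually (u1.mem_nhds u3)).and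
          ((hly.eventually (v1.mem_nhds v3)).and (eventually_ge_atTop n))).exists
        obtain ⟨K, k1, k2, k3, k4, k5⟩ := hK (φ m)
        refine ⟨K, k1, k2, ⟨_, k3, _, ⟨m1, (gp _).1⟩, fgp _⟩, ⟨_, k4, _, ⟨m2, (gq _).1⟩, fgq _⟩,
          k5.trans_le ?_⟩
        refine ENNReal.inv_le_inv.2 ?_
        gcongr
        exact m3.trans (hφ.le_apply)
      have hz2 := (hF _ _ Set.inter_subset_right neU u5 Set.inter_subset_right neV v5).2 hzero
      have hlt : mazDist Ω (U ∩ Ω) (V ∩ Ω) < ENNReal.ofReal (dist x y / 2) := by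
        rw [hz2]; exact ENNReal.ofReal_pos.2 (by positivity)
      obtain ⟨K, k1, k2, ⟨a, aK, aU⟩, ⟨b, bK, bV⟩, k5⟩ := maz_lt hlt
      have := (Metric.edist_le_ediam_of_mem aK bK).trans_lt k5
      rw [edist_dist, ENNReal.ofReal_lt_ofReal_iff (by positivity)] at this
      linarith [far a aU.1 b bV.1]

/-- key separation lemma -/
lemma key_sep (h : IsHomeoBetween f g Ω D) (hΩ : IsOpen Ω) (hD : IsOpen D)
    (hcD : IsCompact (closure D)) (hlc : LocallyConnectedAtBoundary Ω)
    (hfc : FinitelyConnectedAtBoundary D)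
    (hF : ∀ E F : Set X, E ⊆ Ω → E ≠ Ω → IsConnected E → F ⊆ Ω → F ≠ Ω → IsConnected F →
      (mazDist Ω E F = 0 ↔ mazDist D (f '' E) (f '' F) = 0))
    {S T : Set Y} (hST : S ⊆ T) (hT : T ⊆ D) (hSc : IsConnected S) (hSne : S ≠ D)
    (hm : 0 < mazDist D (D ∩ frontier S) (D ∩ frontier T)) {x : X}
    (hxS : x ∈ closure (g '' S)) (hxT : x ∈ closure (Ω \ g '' T)) : False := by
  have hS : S ⊆ D := hST.trans hT
  have gS : g '' S ⊆ Ω := (h.2.2.2.1.mono_left hS).image_subset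
  have gT : g '' T ⊆ Ω := (h.2.2.2.1.mono_left hT).image_subset
  have cross : ∀ K ⊆ D, IsConnected K → (K ∩ S).Nonempty → (K \ T).Nonempty →
      mazDist D (D ∩ frontier S) (D ∩ frontier T) ≤ Metric.ediam K := by
    intro K hK hKc hKS hKT
    obtain ⟨a, a1, a2⟩ := meets_frontier hKc.isPreconnected hKS
      (hKT.mono (Set.diff_subset_diff_right hST))
    obtain ⟨b, b1, b2⟩ := meets_frontier hKc.isPreconnected
      (hKS.mono (Set.inter_subset_inter_right _ hST)) hKT
    exact maz_le hK hKc ⟨a, a1, hK a1, a2⟩ ⟨b, b1, hK b1, b2⟩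
  by_cases hx : x ∈ Ω
  · have h1 := hm_cl h gS hx hxS
    have h2 := hm_cl h Set.diff_subset hx hxT
    have h3 := closure_mono (hm_diff h gT) h2
    rw [hm_img h.symm' hS] at h1
    rw [hm_img h.symm' hT] at h3
    have hxD := h.2.2.1 hx
    have a1 : f x ∈ frontier S :=
      mem_fr h1 (closure_mono (Set.diff_subset_diff_right hST) h3)
    have a2 : f x ∈ frontier T := mem_fr (closure_mono hST h1) h3
    have := maz_le (Set.singleton_subset_iff.2 hxD) isConnected_singleton
      (A := D ∩ frontier S) (B := D ∩ frontier T) ⟨f x, rfl, hxD, a1⟩ ⟨f x, rfl, hxD, a2⟩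
    rw [Metric.ediam_singleton] at this
    exact absurd hm (not_lt.2 this)
  have bx : x ∈ frontier Ω := by
    rw [hΩ.frontier_eq]; exact ⟨closure_mono gS hxS, hx⟩
  obtain ⟨p, hp, hpx⟩ := mem_closure_iff_seq_limit.1 hxT
  have hpT : ∀ n, f (p n) ∈ D \ T := fun n => by
    have := hm_diff h gT ⟨p n, hp n, rfl⟩
    rwa [hm_img h.symm' hT] at this
  obtain ⟨y, hy, φ, hφ, hlim⟩ := hcD.tendsto_subseq
    (x := fun n => f (p n)) (fun n => subset_closure (hpT n).1)
  have hpx' : Tendsto (fun n => p (φ n)) atTop (𝓝 x) := hpx.comp hφ.tendsto_atTop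
  have gfp : ∀ n, g (f (p n)) = p n := fun n => h.2.2.2.2.1 _ (hp n).1
  have hyD : y ∉ D := by
    intro hyD
    have : x = g y := hm_lim h.symm' (p := fun n => f (p (φ n)))
      (fun n => (hpT _).1) hyD hlim (by simpa only [gfp] using hpx')
    exact hx (this ▸ h.2.2.2.1 hyD)
  have by' : y ∈ frontier D := by rw [hD.frontier_eq]; exact ⟨hy, hyD⟩
  obtain ⟨c, hc0, hc⟩ := ENNReal.lt_iff_exists_nnreal_btwn.1 hm
  have hc0 : 0 < (c:ℝ) := by exact_mod_cast hc0
  obtain ⟨V, v1, -, v3, v4, v5⟩ := hfc y by' (c/4) (by positivity)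
  -- find a component
  have hxU : x ∈ closure (⋃ C ∈ {C : Set Y | ∃ y ∈ V ∩ D, C = connectedComponentIn (V ∩ D) y},
      g '' (C \ T)) := by
    refine mem_closure_of_tendsto hpx' ?_
    filter_upwards [hlim.eventually (v1.mem_nhds v3)] with n hn
    have hn' : f (p (φ n)) ∈ V ∩ D := ⟨hn, (hpT _).1⟩
    exact Set.mem_iUnion₂.2 ⟨_, ⟨_, hn', rfl⟩, _, ⟨mem_connectedComponentIn hn', (hpT _).2⟩, gfp _⟩
  rw [v5.closure_biUnion] at hxU
  obtain ⟨C, ⟨z, hz, rfl⟩, hxC⟩ := Set.mem_iUnion₂.1 hxU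
  set C := connectedComponentIn (V ∩ D) z with hC
  have hCVD : C ⊆ V ∩ D := connectedComponentIn_subset _ _
  have hCD : C ⊆ D := hCVD.trans Set.inter_subset_right
  have hCc : IsConnected C := isConnected_connectedComponentIn_iff.2 hz
  have hCd : Metric.ediam C ≤ ENNReal.ofReal (c/2) := by
    have := ediam_le_ball ((hCVD.trans Set.inter_subset_left).trans v4) (by positivity)
    rwa [show 2 * ((c:ℝ)/4) = c/2 by ring] at this
  have hCT : (C \ T).Nonempty := by
    by_contra hne
    rw [Set.not_nonempty_iff_eq_empty.1 hne] at hxC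
    simp at hxC
  have hlt2 : ENNReal.ofReal (c/2) < mazDist D (D ∩ frontier S) (D ∩ frontier T) := by
    refine lt_of_le_of_lt ?_ hc
    rw [← ENNReal.ofReal_coe_nnreal]
    exact ENNReal.ofReal_le_ofReal (by linarith)
  have hCne : C ≠ D := by
    intro he
    obtain ⟨s, hs⟩ := hSc.nonempty
    have := cross C hCD hCc ⟨s, he ▸ hS hs, hs⟩ hCT
    exact absurd (this.trans hCd) (not_le.2 hlt2)
  have gC := hm_ne h.symm' hCD hCne
  have gS' := hm_ne h.symm' hS hSne
  have hz1 : mazDist Ω (g '' C) (g '' S) = 0 :=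
    maz_zero_lc (hlc x bx) gC.1 gS (closure_mono (Set.image_mono Set.diff_subset) hxC) hxS
  have hz2 := (hF _ _ gC.1 gC.2 (hCc.image g (h.2.1.mono hCD)) gS gS'.2
    (hSc.image g (h.2.1.mono hS))).1 hz1
  rw [hm_img h.symm' hCD, hm_img h.symm' hS] at hz2
  have hlt : mazDist D C S < ENNReal.ofReal (c/2) := by
    rw [hz2]; exact ENNReal.ofReal_pos.2 (by positivity)
  obtain ⟨K, k1, k2, ⟨a, aK, aU⟩, ⟨b, bK, bV⟩, k5⟩ := maz_lt hlt
  have hKC : (K ∩ C).Nonempty := ⟨a, aK, aU⟩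
  have := cross (K ∪ C) (Set.union_subset k1 hCD) (k2.union hKC hCc) ⟨b, Or.inl bK, bV⟩
    (hCT.mono (Set.diff_subset_diff_left Set.subset_union_right))
  have h2 := (this.trans (Metric.ediam_union_le hKC)).trans (add_le_add k5.le hCd)
  rw [← ENNReal.ofReal_add (by positivity) (by positivity), add_halves,
    ENNReal.ofReal_coe_nnreal] at h2
  exact absurd hc (not_lt.2 h2)

end homeo

/-- nbhd chain at a locally connected boundary point -/
lemma exists_chain {Ω : Set X} (hΩ : IsOpen Ω) (hb : Bornology.IsBounded Ω) {p : X} (hp : p ∈ Ω)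
    {x : X} (hx : x ∈ frontier Ω) (hlc : LocallyConnectedAt Ω x) :
    ∃ G : ℕ → Set X, IsChainIn Ω G ∧ impression G = {x} ∧
      ∀ r > 0, ∃ k, G k ⊆ Ω ∩ ball x r := by
  have hxΩ : x ∉ Ω := by rw [hΩ.frontier_eq] at hx; exact hx.2
  have hxc : x ∈ closure Ω := by rw [hΩ.frontier_eq] at hx; exact hx.1
  have hpx : 0 < dist p x := dist_pos.2 fun h => hxΩ (h ▸ hp)
  choose U u1 u2 u3 u4 u5 using fun r : {r : ℝ // 0 < r} => hlc r.1 r.2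
  have hnext : ∀ r : {r : ℝ // 0 < r}, ∃ s : {s : ℝ // 0 < s},
      s.1 ≤ r.1 / 2 ∧ ball x (2 * s.1) ⊆ U r := by
    intro r
    obtain ⟨e, he, hs⟩ := Metric.isOpen_iff.1 (u1 r) x (u3 r)
    refine ⟨⟨min (r.1/2) (e/2), lt_min (half_pos r.2) (half_pos he)⟩, min_le_left _ _, ?_⟩
    refine (ball_subset_ball ?_).trans hs
    have := min_le_right (r.1/2) (e/2)
    simp only; linarith
  choose s s1 s2 using hnext
  let ρ : ℕ → {r : ℝ // 0 < r} := fun n => Nat.rec ⟨dist p x, hpx⟩ (fun _ r => s r) n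
  have ρs : ∀ n, ρ (n+1) = s (ρ n) := fun n => rfl
  have ρle : ∀ n, (ρ n).1 ≤ dist p x / 2 ^ n := by
    intro n
    induction n with
    | zero => simp [ρ]
    | succ n ih =>
      rw [ρs, pow_succ, ← div_div]
      linarith [s1 (ρ n)]
  have ρle0 : ∀ n, (ρ n).1 ≤ dist p x := fun n =>
    (ρle n).trans (div_le_self hpx.le (one_le_pow₀ (by norm_num)))
  have hsmall : ∀ r > 0, ∃ k, (ρ k).1 < r := by
    intro r hr
    have : Tendsto (fun n : ℕ => dist p x * (1 / 2 : ℝ) ^ n) atTop (𝓝 (dist p x * 0)) :=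
      (tendsto_pow_atTop_nhds_zero_of_lt_one (by norm_num) (by norm_num)).const_mul _
    rw [mul_zero] at this
    obtain ⟨n, hn⟩ := (this.eventually_lt_const hr).exists
    refine ⟨n, (ρle n).trans_lt ?_⟩
    rwa [one_div, inv_pow, ← div_eq_mul_inv] at hn
  have hsub : ∀ n, U (ρ (n+1)) ⊆ ball x (ρ (n+1)).1 := fun n => u4 _
  have hcl : ∀ n, x ∈ closure (U (ρ n) ∩ Ω) := fun n =>
    (u1 _).inter_closure ⟨u3 _, hxc⟩
  have himp : impression (fun n => U (ρ n) ∩ Ω) = {x} := by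
    apply Set.Subset.antisymm
    · intro y hy
      rw [impression, Set.mem_iInter] at hy
      by_contra hne
      have hd : 0 < dist y x := dist_pos.2 hne
      obtain ⟨k, hk⟩ := hsmall _ hd
      have : y ∈ closedBall x (ρ k).1 := closure_minimal
        ((Set.inter_subset_left.trans (u4 _)).trans ball_subset_closedBall) isClosed_closedBall (hy k)
      rw [mem_closedBall] at this
      linarith
    · rintro _ rfl
      exact Set.mem_iInter.2 hcl
  refine ⟨fun n => U (ρ n) ∩ Ω, ⟨?_, ?_, ?_, ?_⟩, himp, ?_⟩
  · intro k
    refine ⟨hb.subset Set.inter_subset_right, u5 _, Set.inter_subset_right, ?_, x, hcl k, hx⟩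
    intro he
    have hp' : p ∈ U (ρ k) ∩ Ω := (Set.ext_iff.1 he p).2 hp
    have := u4 _ hp'.1
    rw [mem_ball] at this
    linarith [ρle0 k]
  · intro k
    refine Set.inter_subset_inter_left _ ((hsub k).trans ?_)
    refine (ball_subset_ball ?_).trans (s2 (ρ k))
    rw [ρs]; linarith [(s (ρ k)).2]
  · intro k
    have hpos := (ρ (k+1)).2
    refine lt_of_lt_of_le (ENNReal.ofReal_pos.2 hpos) ?_
    refine le_iInf₂ ?_
    rintro K ⟨-, -, ⟨a, aK, -, aF⟩, ⟨b, bK, bΩ, bF⟩⟩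
    refine le_trans ?_ (Metric.edist_le_ediam_of_mem bK aK)
    rw [edist_dist]
    apply ENNReal.ofReal_le_ofReal
    have ha : a ∈ closedBall x (ρ (k+1)).1 := closure_minimal
        ((Set.inter_subset_left.trans (u4 _)).trans ball_subset_closedBall) isClosed_closedBall aF.1
    have hb : b ∉ ball x (2 * (ρ (k+1)).1) := by
      intro hb
      have : b ∈ U (ρ k) ∩ Ω := ⟨s2 (ρ k) hb, bΩ⟩
      rw [((u1 _).inter hΩ).frontier_eq] at bF
      exact bF.2 this
    rw [mem_closedBall] at ha
    rw [mem_ball, not_lt] at hb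
    linarith [dist_triangle b a x]
  · change impression _ ⊆ _
    rw [himp]; exact Set.singleton_subset_iff.2 hx
  · intro r hr
    obtain ⟨k, hk⟩ := hsmall r hr
    exact ⟨k, fun z hz => ⟨hz.2, ball_subset_ball hk.le (u4 _ hz.1)⟩⟩

end Aux

/-- if moreover `D` is finitely connected at the boundary and `[F_k]` is a
prime end in `D`, then `[f⁻¹(F_k)]` is a singleton prime end in `Ω`. -/
theorem statement_3 {X Y : Type*} [MetricSpace X] [MetricSpace Y]
    (hX : AssumptionsA X) (hY : AssumptionsA Y)
    (Ω : Set X) (hΩdom : IsDomainIn Ω) (hΩbdd : Bornology.IsBounded Ω)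
    (hΩne : Ω ≠ Set.univ) (hΩlc : LocallyConnectedAtBoundary Ω)
    (D : Set Y) (hDdom : IsDomainIn D) (hDbdd : Bornology.IsBounded D)
    (hDne : D ≠ Set.univ) (hDfc : FinitelyConnectedAtBoundary D)
    (f : X → Y) (g : Y → X) (hf : ClassF Ω D f g)
    (F : ℕ → Set Y) (hF : IsPrimeChain D F) :
    IsSingletonPrimeChain Ω (fun k => g '' F k) := by
  obtain ⟨hH, hM'⟩ := hf
  have hΩo := hΩdom.1
  have hDo := hDdom.1
  have hcΩ := aux_compact hX hΩbdd
  have hcD := aux_compact hY hDbdd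
  have hM : ∀ E F : Set X, E ⊆ Ω → E ≠ Ω → IsConnected E → F ⊆ Ω → F ≠ Ω → IsConnected F →
      (mazDist Ω E F = 0 ↔ mazDist D (f '' E) (f '' F) = 0) := by
    intro E F h1 h2 h3 h4 h5 h6
    rw [← inner_eq_maz hX.2.2 hΩo, ← inner_eq_maz hY.2.2 hDo]
    exact hM' E F h1 h2 h3 h4 h5 h6
  obtain ⟨⟨c1, c2, c3, c4⟩, hprime⟩ := hF
  have hFD : ∀ k, F k ⊆ D := fun k => (c1 k).2.2.1
  have hEΩ : ∀ k, g '' F k ⊆ Ω := fun k => (hH.2.2.2.1.mono_left (hFD k)).image_subset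
  have hsep : ∀ k x, x ∈ closure (g '' F (k+1)) → x ∈ closure (Ω \ g '' F k) → False :=
    fun k x => key_sep hH hΩo hDo hcD hΩlc hDfc hM (c2 k) (hFD k) (c1 _).2.1 (c1 _).2.2.2.1 (c3 k)
  have hchain : IsChainIn Ω (fun k => g '' F k) := by
    refine ⟨fun k => hm_acc hH.symm' hDo hΩo hcΩ hΩbdd (c1 k), fun k => Set.image_mono (c2 k), ?_,
      hm_imp hH.symm' hDo hΩo hFD c4⟩
    intro k
    rw [pos_iff_ne_zero]
    intro hz
    obtain ⟨p, q, hp, hq, -, hpq⟩ := maz_zero_seq hz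
    obtain ⟨x, hx, φ, hφ, hlim⟩ := hcΩ.tendsto_subseq (x := p) (fun n => subset_closure (hp n).1)
    have hq' : Tendsto (q ∘ φ) atTop (𝓝 x) :=
      (tendsto_iff_of_dist (hpq.comp hφ.tendsto_atTop)).1 hlim
    refine hsep k x ?_ ?_
    · exact isClosed_closure.mem_of_tendsto hlim (Eventually.of_forall fun n => (hp _).2.2.1)
    · exact isClosed_closure.mem_of_tendsto hq'
        (Eventually.of_forall fun n => mem_cl_diff hΩo (hq _).1 (hq _).2.2)
  have hpr : IsPrimeChain Ω (fun k => g '' F k) := by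
    refine ⟨hchain, fun G hG hdiv => ?_⟩
    obtain ⟨d1, d2, d3, d4⟩ := hG
    have hGΩ : ∀ k, G k ⊆ Ω := fun k => (d1 k).2.2.1
    have hfG : IsChainIn D (fun k => f '' G k) :=
      ⟨fun k => hm_acc hH hΩo hDo hcD hDbdd (d1 k), fun k => Set.image_mono (d2 k),
        fun k => maz_fwd hH hΩo hDo hcΩ hΩlc hM (hGΩ _) (hGΩ _) (d3 k),
        hm_imp hH hΩo hDo hGΩ d4⟩
    have h1 := hprime _ hfG (fun k => by
      obtain ⟨l, hl⟩ := hdiv k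
      refine ⟨l, ?_⟩
      have := Set.image_mono (f := f) hl
      rwa [hm_img hH.symm' (hFD k)] at this)
    intro k
    obtain ⟨l, hl⟩ := h1 k
    refine ⟨l, ?_⟩
    have := Set.image_mono (f := g) hl
    rwa [hm_img hH (hGΩ k)] at this
  refine ⟨hpr, ?_⟩
  obtain ⟨x, hx⟩ := IsCompact.nonempty_iInter_of_sequence_nonempty_isCompact_isClosed
    (fun k => closure (g '' F k)) (fun k => closure_mono (hchain.2.1 k))
    (fun k => ((c1 k).2.1.nonempty.image g).closure)
    (hcΩ.of_isClosed_subset isClosed_closure (closure_mono (hEΩ 0))) (fun k => isClosed_closure)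
  have hxf : x ∈ frontier Ω := hchain.2.2.2 hx
  obtain ⟨p, hp⟩ := hΩdom.2.nonempty
  obtain ⟨G, hG, hGi, hGs⟩ := exists_chain hΩo hΩbdd hp hxf (hΩlc x hxf)
  refine ⟨x, Set.Subset.antisymm ?_ (Set.singleton_subset_iff.2 hx)⟩
  have hdiv := hpr.2 G hG (fun k => by
    have hn : x ∉ closure (Ω \ g '' F k) := hsep k x (Set.mem_iInter.1 hx (k+1))
    obtain ⟨r, hr, hd⟩ := Metric.isOpen_iff.1 isClosed_closure.isOpen_compl x hn
    obtain ⟨l, hl⟩ := hGs r hr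
    refine ⟨l, fun z hz => ?_⟩
    by_contra hzn
    exact hd (hl hz).2 (subset_closure ⟨(hl hz).1, hzn⟩))
  rw [← hGi]
  intro y hy
  refine Set.mem_iInter.2 fun k => ?_
  obtain ⟨l, hl⟩ := hdiv k
  exact closure_mono hl (Set.mem_iInter.1 hy l)
end
end

section
/- Let X and Y be metric spaces satisfying assumptions (A), let Ω ⊊ X be a bounded domain satisfying the bounded turning condition, let Ω' ⊊ Y be a bounded domain, and let f ∈ F(Ω, Ω'). Suppose f has a continuous extension F : closure(Ω) → Ω'' (i.e., F is continuous and F restricted to Ω equals f), where Ω'' := Ω' ∪ ⋃_{x ∈ ∂Ω} C(f,x). Then every prime end of Ω' whose impression is contained in ⋃_{x ∈ ∂Ω} C(f,x) is a singleton prime end. -/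
open Set Metric Filter Bornology
open scoped ENNReal Topology

noncomputable section

theorem aux_frontier {Y : Type*} [MetricSpace Y] {K S : Set Y} (hK : IsPreconnected K)
    (h1 : (K ∩ S).Nonempty) (h2 : ¬ K ⊆ S) : (K ∩ frontier S).Nonempty := by
  by_contra hne
  have hno : ∀ z ∈ K, z ∉ frontier S := fun z hz hz' => hne ⟨z, hz, hz'⟩
  have hint : ∀ z ∈ K, z ∈ closure S → z ∈ interior S := by
    intro z hz hc
    by_contra hi
    exact hno z hz ⟨hc, hi⟩
  obtain ⟨p, hpK, hpS⟩ := h1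
  obtain ⟨q, hqK, hqS⟩ := Set.not_subset.1 h2
  obtain ⟨z, hzK, hz1, hz2⟩ := hK (interior S) (closure S)ᶜ isOpen_interior
    isClosed_closure.isOpen_compl
    (fun z hz => by
      by_cases hc : z ∈ closure S
      · exact Or.inl (hint z hz hc)
      · exact Or.inr hc)
    ⟨p, hpK, hint p hpK (subset_closure hpS)⟩
    ⟨q, hqK, fun hc => hqS (interior_subset (hint q hqK hc))⟩
  exact hz2 (subset_closure (interior_subset hz1))

theorem aux_totbdd {X : Type*} [MetricSpace X] (h : DoublingSpace X) (S : Set X)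
    (hS : Bornology.IsBounded S) : TotallyBounded S := by
  obtain ⟨N, hN⟩ := h
  have key : ∀ (n : ℕ) (x : X) (r : ℝ), ∃ t : Finset X,
      Metric.ball x r ⊆ ⋃ y ∈ t, Metric.ball y (r / 2 ^ n) := by
    classical
    intro n
    induction n with
    | zero => intro x r; exact ⟨{x}, by simp⟩
    | succ n ih =>
      intro x r
      obtain ⟨t, ht⟩ := ih x r
      choose u _ hu using fun y => hN y (r / 2 ^ n)
      refine ⟨t.biUnion u, fun z hz => ?_⟩
      obtain ⟨y, hy, hzy⟩ := Set.mem_iUnion₂.1 (ht hz)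
      obtain ⟨w, hw, hzw⟩ := Set.mem_iUnion₂.1 (hu y hzy)
      refine Set.mem_iUnion₂.2 ⟨w, Finset.mem_biUnion.2 ⟨y, hy, hw⟩, ?_⟩
      rwa [pow_succ, ← div_div]
  rcases S.eq_empty_or_nonempty with rfl | ⟨x, hx⟩
  · exact totallyBounded_empty
  obtain ⟨R, hR⟩ := hS.subset_ball x
  rw [Metric.totallyBounded_iff]
  intro ε hε
  obtain ⟨n, hn⟩ := exists_nat_gt (R / ε)
  obtain ⟨t, ht⟩ := key n x R
  refine ⟨t, t.finite_toSet, hR.trans (ht.trans ?_)⟩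
  refine Set.iUnion₂_mono fun y hy => Metric.ball_subset_ball ?_
  have h2 : (n : ℝ) ≤ 2 ^ n := by exact_mod_cast (Nat.lt_two_pow_self).le
  rw [div_le_iff₀ (by positivity)]
  rw [div_lt_iff₀ hε] at hn
  nlinarith

/-- joined by a rectifiable curve inside `W`. -/
def RectJoin {Y : Type*} [MetricSpace Y] (W : Set Y) (p q : Y) : Prop :=
  ∃ γ : ℝ → Y, ContinuousOn γ (Set.Icc 0 1) ∧ γ '' Set.Icc 0 1 ⊆ W ∧
      eVariationOn γ (Set.Icc 0 1) < ⊤ ∧ γ 0 = p ∧ γ 1 = q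

theorem RectJoin.trans' {Y : Type*} [MetricSpace Y] {W : Set Y} {p q r : Y}
    (h1 : RectJoin W p q) (h2 : RectJoin W q r) : RectJoin W p r := by
  obtain ⟨a, ac, aW, av, a0, a1⟩ := h1
  obtain ⟨b, bc, bW, bv, b0, b1⟩ := h2
  let γ : ℝ → Y := fun t => if t ≤ 1/2 then a (2*t) else b (2*t-1)
  have e1 : EqOn γ (a ∘ fun t => 2*t) (Icc 0 (1/2)) := by
    intro t ht
    simp only [γ, Function.comp, if_pos ht.2]
  have e2 : EqOn γ (b ∘ fun t => 2*t-1) (Icc (1/2) 1) := by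
    intro t ht
    by_cases h : t ≤ 1/2
    · have : t = 1/2 := le_antisymm h ht.1
      subst this
      simp [γ, a1, b0]
    · simp only [γ, Function.comp, if_neg h]
  have m1 : MapsTo (fun t : ℝ => 2*t) (Icc 0 (1/2)) (Icc 0 1) := by
    intro t ht
    constructor <;> simp only <;> linarith [ht.1, ht.2]
  have m2 : MapsTo (fun t : ℝ => 2*t-1) (Icc (1/2) 1) (Icc 0 1) := by
    intro t ht
    constructor <;> simp only <;> linarith [ht.1, ht.2]
  have hun : Icc (0:ℝ) 1 = Icc 0 (1/2) ∪ Icc (1/2) 1 :=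
    (Icc_union_Icc_eq_Icc (by norm_num) (by norm_num)).symm
  refine ⟨γ, ?_, ?_, ?_, ?_, ?_⟩
  · rw [hun]
    refine ContinuousOn.union_of_isClosed ?_ ?_ isClosed_Icc isClosed_Icc
    · exact (ac.comp (by fun_prop) m1).congr e1
    · exact (bc.comp (by fun_prop) m2).congr e2
  · rw [hun, image_union]
    refine union_subset ?_ ?_
    · rw [e1.image_eq]
      rintro _ ⟨t, ht, rfl⟩
      exact aW ⟨_, m1 ht, rfl⟩
    · rw [e2.image_eq]
      rintro _ ⟨t, ht, rfl⟩
      exact bW ⟨_, m2 ht, rfl⟩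
  · have := eVariationOn.Icc_add_Icc γ (s := univ) (a := (0:ℝ)) (b := 1/2) (c := 1)
      (by norm_num) (by norm_num) (mem_univ _)
    simp only [univ_inter] at this
    rw [← this, eVariationOn.eq_of_eqOn e1, eVariationOn.eq_of_eqOn e2]
    refine ENNReal.add_lt_top.2 ⟨lt_of_le_of_lt ?_ av, lt_of_le_of_lt ?_ bv⟩
    · exact eVariationOn.comp_le_of_monotoneOn _ _
        (fun x _ y _ h => by beta_reduce; linarith) m1
    · exact eVariationOn.comp_le_of_monotoneOn _ _
        (fun x _ y _ h => by beta_reduce; linarith) m2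
  · simp [γ, a0]
  · have : ¬ ((1:ℝ) ≤ 1/2) := by norm_num
    simp only [γ, if_neg this]
    norm_num [b1]

theorem aux_rect {Y : Type*} [MetricSpace Y] (hY : QuasiconvexSpace Y) {W K : Set Y}
    (hW : IsOpen W) (hK : IsPreconnected K) (hKW : K ⊆ W) {p q : Y} (hp : p ∈ K) (hq : q ∈ K) :
    RectJoin W p q := by
  obtain ⟨C, hC, hc⟩ := hY
  refine hK.induction₂' (RectJoin W) ?_ (fun x y z _ _ _ => RectJoin.trans') hp hq
  intro x hx
  obtain ⟨ρ, hρ, hb⟩ := Metric.isOpen_iff.1 hW x (hKW hx)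
  have hC0 : 0 < C := by linarith
  have hnb : ball x (ρ / (2 * C)) ∈ 𝓝 x := ball_mem_nhds x (by positivity)
  filter_upwards [mem_nhdsWithin_of_mem_nhds hnb] with y hy
  have hy' : C * dist x y < ρ / 2 := by
    rw [mem_ball, dist_comm, lt_div_iff₀ (by positivity)] at hy
    nlinarith
  have hCy : dist x y ≤ C * dist x y := by nlinarith [dist_nonneg (x := x) (y := y)]
  constructor
  · obtain ⟨γ, h1, h2, h3, h4⟩ := hc x y
    refine ⟨γ, h1, ?_, h4.trans_lt ENNReal.ofReal_lt_top, h2, h3⟩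
    rintro _ ⟨t, ht, rfl⟩
    apply hb
    have := (eVariationOn.edist_le γ ht (left_mem_Icc.2 zero_le_one)).trans h4
    rw [edist_dist, ENNReal.ofReal_le_ofReal_iff (by positivity), h2] at this
    rw [mem_ball]; linarith
  · obtain ⟨γ, h1, h2, h3, h4⟩ := hc y x
    refine ⟨γ, h1, ?_, h4.trans_lt ENNReal.ofReal_lt_top, h2, h3⟩
    rintro _ ⟨t, ht, rfl⟩
    apply hb
    have := (eVariationOn.edist_le γ ht (right_mem_Icc.2 zero_le_one)).trans h4
    rw [edist_dist, ENNReal.ofReal_le_ofReal_iff (by positivity), h3, dist_comm y x] at this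
    rw [mem_ball]; linarith

theorem aux_inner {Y : Type*} [MetricSpace Y] (hY : QuasiconvexSpace Y) {Ω K A B : Set Y}
    (hΩ : IsOpen Ω) (hK : IsPreconnected K) (hKW : K ⊆ Ω) (hA : (K ∩ A).Nonempty)
    (hB : (K ∩ B).Nonempty) : innerDiamDist Ω A B ≤ EMetric.diam K := by
  obtain ⟨p, hp, hpA⟩ := hA
  obtain ⟨q, hq, hqB⟩ := hB
  have main : ∀ ε : NNReal, 0 < ε → innerDiamDist Ω A B ≤ EMetric.diam K + 2 * ε := by
    intro ε hε
    obtain ⟨γ, h1, h2, h3, h4, h5⟩ := aux_rect hY (W := Metric.thickening ε K ∩ Ω)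
      (Metric.isOpen_thickening.inter hΩ) hK
      (subset_inter (Metric.self_subset_thickening (by exact_mod_cast hε) K) hKW) hp hq
    refine (iInf₂_le γ ⟨h1, h2.trans inter_subset_right, h3, h4 ▸ hpA, h5 ▸ hqB⟩).trans ?_
    exact (Metric.ediam_mono (h2.trans inter_subset_left)).trans (Metric.ediam_thickening_le ε)
  refine ENNReal.le_of_forall_pos_le_add fun ε hε _ => ?_
  have := main (ε / 2) (by positivity)
  refine this.trans (le_of_eq ?_)
  congr 1
  rw [← ENNReal.coe_ofNat, ← ENNReal.coe_mul]
  congr 1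
  rw [mul_div_cancel₀]; norm_num

theorem aux_nbhd {X : Type*} [MetricSpace X] {Ω : Set X} (h : BoundedTurning Ω) :
    ∃ c : ℝ, 0 < c ∧ c < 1 ∧ ∀ x ∈ closure Ω, ∀ r : ℝ, 0 < r → ∃ V : Set X,
      IsConnected V ∧ ball x (c * r) ∩ Ω ⊆ V ∧ V ⊆ ball x r ∩ Ω := by
  obtain ⟨L, hL, h⟩ := h
  have hL0 : 0 < 2 * L + 1 := by linarith
  refine ⟨1 / (2 * L + 1), by positivity, by rw [div_lt_one hL0]; linarith, ?_⟩
  intro x hx r hr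
  set s := 1 / (2 * L + 1) * r with hs
  have hs0 : 0 < s := by positivity
  have hsr : (2 * L + 1) * s = r := by rw [hs]; field_simp
  have hsr' : s ≤ r := by nlinarith
  obtain ⟨p, hpΩ, hp⟩ := Metric.mem_closure_iff.1 hx s hs0
  rw [dist_comm] at hp
  have hpm : p ∈ ball x r ∩ Ω := ⟨lt_of_lt_of_le hp hsr', hpΩ⟩
  refine ⟨connectedComponentIn (ball x r ∩ Ω) p, isConnected_connectedComponentIn_iff.2 hpm, ?_,
    connectedComponentIn_subset _ _⟩
  rintro y ⟨hy, hyΩ⟩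
  by_cases hyp : p = y
  · subst hyp; exact mem_connectedComponentIn hpm
  obtain ⟨K, hK, hKc, hKconn, -, hpK, hyK, hd⟩ := h p hpΩ y hyΩ hyp
  refine hKconn.isPreconnected.subset_connectedComponentIn hpK
    (show K ⊆ ball x r ∩ Ω from fun z hz => ⟨?_, hK hz⟩) hyK
  have h1 := Metric.dist_le_diam_of_mem hKc.isBounded hz hpK
  have h2 := dist_triangle z p x
  have h3 := dist_triangle_right p y x
  rw [mem_ball] at hy ⊢
  have h4 : L * dist p y ≤ L * (2 * s) := by
    apply mul_le_mul_of_nonneg_left _ (by linarith); linarith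
  nlinarith

theorem aux_key {X Y : Type*} [MetricSpace X] [MetricSpace Y]
    (hX : AssumptionsA X) (hY : AssumptionsA Y)
    (Ω : Set X) (hΩbdd : Bornology.IsBounded Ω) (hΩbt : BoundedTurning Ω)
    (Ω' : Set Y) (hΩ'dom : IsDomainIn Ω')
    (f : X → Y) (g : Y → X) (hf : ClassF Ω Ω' f g) (A B : Set Y) (hA : A ⊆ Ω') (hB : B ⊆ Ω')
    (δ : ℝ) (hδ : 0 < δ) (hAB : ∀ a ∈ A, ∀ b ∈ B, δ ≤ dist (g a) (g b)) :
    0 < mazDist Ω' A B := by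
  obtain ⟨⟨hfc, hgc, hfm, hgm, hgf, hfg⟩, hF⟩ := hf
  obtain ⟨hXc, hXd, -⟩ := hX
  have hcomp : IsCompact (closure Ω) :=
    isCompact_iff_totallyBounded_isComplete.2
      ⟨(aux_totbdd hXd Ω hΩbdd).closure, isClosed_closure.isComplete⟩
  by_contra hz
  have hz : mazDist Ω' A B = 0 := by simpa using hz
  have hex : ∀ n : ℕ, ∃ K : Set Y, (K ⊆ Ω' ∧ IsConnected K ∧ (K ∩ A).Nonempty ∧
      (K ∩ B).Nonempty) ∧ EMetric.diam K < ((n : ℝ≥0∞) + 1)⁻¹ := by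
    intro n
    have : mazDist Ω' A B < ((n : ℝ≥0∞) + 1)⁻¹ := by
      rw [hz]; simp
    simpa only [mazDist, iInf_lt_iff, exists_prop] using this
  choose K hK hKd using hex
  choose a ha using fun n => (hK n).2.2.1
  choose b hb using fun n => (hK n).2.2.2
  obtain ⟨⟨a', b'⟩, hab', φ, hφ, hlim⟩ := (hcomp.prod hcomp).tendsto_subseq
    (x := fun n => (g (a n), g (b n)))
    (fun n => ⟨subset_closure (hgm (hA (ha n).2)), subset_closure (hgm (hB (hb n).2))⟩)
  have hla : Tendsto (fun n => g (a (φ n))) atTop (𝓝 a') :=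
    (continuous_fst.tendsto _).comp hlim
  have hlb : Tendsto (fun n => g (b (φ n))) atTop (𝓝 b') :=
    (continuous_snd.tendsto _).comp hlim
  have hd : δ ≤ dist a' b' :=
    ge_of_tendsto' (hla.dist hlb) fun n => hAB _ (ha _).2 _ (hb _).2
  obtain ⟨c, hc0, hc1, hV⟩ := aux_nbhd hΩbt
  obtain ⟨V, hVc, hV1, hV2⟩ := hV a' hab'.1 (δ/3) (by positivity)
  obtain ⟨W, hWc, hW1, hW2⟩ := hV b' hab'.2 (δ/3) (by positivity)
  have hdis : ∀ v ∈ V, ∀ w ∈ W, δ/3 ≤ dist v w := by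
    intro v hv w hw
    have h1 := (hV2 hv).1
    have h2 := (hW2 hw).1
    rw [mem_ball] at h1 h2
    have := dist_triangle4 a' v w b'
    rw [dist_comm a' v] at this
    linarith
  obtain ⟨v, hv⟩ := hVc.nonempty
  obtain ⟨w, hw⟩ := hWc.nonempty
  have hVne : V ≠ Ω := by
    intro h
    have := hdis w (h ▸ (hW2 hw).2) w hw
    rw [dist_self] at this; linarith
  have hWne : W ≠ Ω := by
    intro h
    have := hdis v hv v (h ▸ (hV2 hv).2)
    rw [dist_self] at this; linarith
  have hiff := hF V W (hV2.trans inter_subset_right) hVne hVc (hW2.trans inter_subset_right)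
    hWne hWc
  have hpos : innerDiamDist Ω V W ≠ 0 := by
    have : ENNReal.ofReal (δ/3) ≤ innerDiamDist Ω V W := by
      refine le_iInf₂ fun γ hγ => ?_
      refine le_trans ?_ (Metric.edist_le_ediam_of_mem (mem_image_of_mem γ (left_mem_Icc.2 zero_le_one))
        (mem_image_of_mem γ (right_mem_Icc.2 zero_le_one)))
      rw [edist_dist]
      exact ENNReal.ofReal_le_ofReal (hdis _ hγ.2.2.2.1 _ hγ.2.2.2.2)
    have h2 : 0 < ENNReal.ofReal (δ/3) := ENNReal.ofReal_pos.2 (by positivity)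
    exact (h2.trans_le this).ne'
  apply hpos
  rw [hiff]
  have ev1 : ∀ᶠ n in atTop, g (a (φ n)) ∈ ball a' (c * (δ/3)) :=
    hla.eventually (ball_mem_nhds _ (by positivity))
  have ev2 : ∀ᶠ n in atTop, g (b (φ n)) ∈ ball b' (c * (δ/3)) :=
    hlb.eventually (ball_mem_nhds _ (by positivity))
  have ev : ∀ᶠ n in atTop, innerDiamDist Ω' (f '' V) (f '' W) ≤ ((φ n : ℕ) : ℝ≥0∞)⁻¹ := by
    filter_upwards [ev1, ev2] with n h1 h2
    have hA' := hA (ha (φ n)).2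
    have hB' := hB (hb (φ n)).2
    have := aux_inner hY.2.2 hΩ'dom.1 (hK (φ n)).2.1.isPreconnected (hK (φ n)).1
      (A := f '' V) (B := f '' W)
      ⟨a (φ n), (ha _).1, g (a (φ n)), hV1 ⟨h1, hgm hA'⟩, hfg _ hA'⟩
      ⟨b (φ n), (hb _).1, g (b (φ n)), hW1 ⟨h2, hgm hB'⟩, hfg _ hB'⟩
    refine this.trans ((hKd _).le.trans ?_)
    exact ENNReal.inv_le_inv.2 le_self_add
  have hlim0 : Tendsto (fun n => ((φ n : ℕ) : ℝ≥0∞)⁻¹) atTop (𝓝 0) :=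
    ENNReal.tendsto_inv_nat_nhds_zero.comp hφ.tendsto_atTop
  exact le_antisymm (ge_of_tendsto hlim0 ev) bot_le

/-- if `f ∈ F(Ω, Ω')` with `Ω` of bounded turning has a continuous extension
`F : closure Ω → Ω''`, then every prime end of `Ω'` with impression contained in
`⋃_{x ∈ ∂Ω} C(f,x)` is a singleton prime end. -/
theorem statement_6 {X Y : Type*} [MetricSpace X] [MetricSpace Y]
    (hX : AssumptionsA X) (hY : AssumptionsA Y)
    (Ω : Set X) (hΩdom : IsDomainIn Ω) (hΩbdd : Bornology.IsBounded Ω)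
    (hΩne : Ω ≠ Set.univ) (hΩbt : BoundedTurning Ω)
    (Ω' : Set Y) (hΩ'dom : IsDomainIn Ω') (hΩ'bdd : Bornology.IsBounded Ω')
    (hΩ'ne : Ω' ≠ Set.univ)
    (f : X → Y) (g : Y → X) (hf : ClassF Ω Ω' f g)
    (F : X → Y) (hFcont : ContinuousOn F (closure Ω)) (hFeq : Set.EqOn F f Ω)
    (hFmaps : Set.MapsTo F (closure Ω) (Ω' ∪ ⋃ x ∈ frontier Ω, clusterSetOn f Ω x)) :
    ∀ E : ℕ → Set Y, IsPrimeChain Ω' E →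
      impression E ⊆ ⋃ x ∈ frontier Ω, clusterSetOn f Ω x →
      ∃ y : Y, impression E = {y} := by
  intro E hE _
  obtain ⟨⟨hE1, hE2, hE3, hE4⟩, hprime⟩ := hE
  have hkey := aux_key hX hY Ω hΩbdd hΩbt Ω' hΩ'dom f g hf
  obtain ⟨⟨hfc, hgc, hfm, hgm, hgf, hfg⟩, -⟩ := hf
  obtain ⟨hXc, hXd, -⟩ := hX
  have hcomp : IsCompact (closure Ω) :=
    isCompact_iff_totallyBounded_isComplete.2
      ⟨(aux_totbdd hXd Ω hΩbdd).closure, isClosed_closure.isComplete⟩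
  have hEsub : ∀ k, E k ⊆ Ω' := fun k => (hE1 k).2.2.1
  have hgsub : ∀ k, g '' E k ⊆ Ω := fun k => by
    rintro _ ⟨y, hy, rfl⟩; exact hgm (hEsub k hy)
  have hfgE : ∀ k, f '' (g '' E k) = E k := by
    intro k
    ext y
    constructor
    · rintro ⟨_, ⟨z, hz, rfl⟩, rfl⟩
      rw [hfg z (hEsub k hz)]; exact hz
    · intro hy
      exact ⟨g y, ⟨y, hy, rfl⟩, hfg y (hEsub k hy)⟩
  obtain ⟨x, hx⟩ : (⋂ k, closure (g '' E k)).Nonempty := by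
    refine IsCompact.nonempty_iInter_of_sequence_nonempty_isCompact_isClosed _
      (fun k => closure_mono (image_mono (hE2 k)))
      (fun k => ((hE1 k).2.1.nonempty.image g).closure)
      (hcomp.of_isClosed_subset isClosed_closure (closure_mono (hgsub 0)))
      (fun k => isClosed_closure)
  rw [mem_iInter] at hx
  have hxcl : x ∈ closure Ω := closure_mono (hgsub 0) (hx 0)
  -- continuity of `F` on subsets
  have hFcl : ∀ S : Set X, S ⊆ Ω → x ∈ closure S → F x ∈ closure (f '' S) := by
    intro S hS hxS
    have h1 : ContinuousWithinAt F S x := (hFcont x hxcl).mono (hS.trans subset_closure)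
    have h2 := h1.mem_closure_image hxS
    rwa [(hFeq.mono hS).image_eq] at h2
  have hFimp : ∀ k, F x ∈ closure (E k) := by
    intro k
    have := hFcl _ (hgsub k) (hx k)
    rwa [hfgE] at this
  have hFfr : F x ∈ frontier Ω' := hE4 (mem_iInter.2 hFimp)
  have hFnot : F x ∉ Ω' := fun h => by
    rw [hΩ'dom.1.frontier_eq] at hFfr; exact hFfr.2 h
  have hxnot : x ∉ Ω := fun h => hFnot (by rw [hFeq h]; exact hfm h)
  obtain ⟨c, hc0, hc1, hV⟩ := aux_nbhd hΩbt
  obtain ⟨q, hq⟩ := hΩdom.2.nonempty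
  set r0 := dist q x with hr0
  have hr0pos : 0 < r0 := dist_pos.2 (fun h => hxnot (h ▸ hq))
  set r : ℕ → ℝ := fun k => r0 * (c / 2) ^ k with hr
  have hrpos : ∀ k, 0 < r k := fun k => by positivity
  have hrs : ∀ k, r (k+1) = c / 2 * r k := fun k => by simp only [hr]; ring
  have hrle : ∀ k, r k ≤ r0 := fun k => by
    simp only [hr]
    have : (c/2)^k ≤ 1 := pow_le_one₀ (by positivity) (by linarith)
    nlinarith
  have hrlim : Tendsto r atTop (𝓝 0) := by
    have := (tendsto_pow_atTop_nhds_zero_of_lt_one (r := c/2) (by positivity)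
      (by linarith)).const_mul r0
    simpa [hr] using this
  choose V hVc hV1 hV2 using fun k => hV x hxcl (r k) (hrpos k)
  have hVΩ : ∀ k, V k ⊆ Ω := fun k => (hV2 k).trans inter_subset_right
  have hxV : ∀ k, x ∈ closure (V k) := by
    intro k
    rw [Metric.mem_closure_iff] at hxcl ⊢
    intro ε hε
    obtain ⟨z, hz, hzd⟩ := hxcl (min ε (c * r k)) (lt_min hε (mul_pos hc0 (hrpos k)))
    refine ⟨z, hV1 k ⟨?_, hz⟩, hzd.trans_le (min_le_left _ _)⟩
    rw [mem_ball, dist_comm]; exact hzd.trans_le (min_le_right _ _)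
  have hGsmall : ∀ ε > 0, ∃ N, ∀ k ≥ N, f '' V k ⊆ closedBall (F x) ε := by
    intro ε hε
    obtain ⟨η, hη, h⟩ := Metric.continuousWithinAt_iff.1 (hFcont x hxcl) ε hε
    obtain ⟨N, hN⟩ := eventually_atTop.1 (hrlim.eventually (gt_mem_nhds hη))
    refine ⟨N, fun k hk => ?_⟩
    rintro _ ⟨z, hz, rfl⟩
    have h1 := hV2 k hz
    have := h (subset_closure h1.2) ((mem_ball.1 h1.1).trans (hN k hk))
    rw [hFeq h1.2] at this
    exact this.le
  have hGΩ : ∀ k, f '' V k ⊆ Ω' := fun k => by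
    rintro _ ⟨z, hz, rfl⟩; exact hfm (hVΩ k hz)
  have hGconn : ∀ k, IsConnected (f '' V k) := fun k => (hVc k).image f (hfc.mono (hVΩ k))
  have hGimp : (⋂ k, closure (f '' V k)) ⊆ {F x} := by
    intro y hy
    rw [mem_iInter] at hy
    rw [mem_singleton_iff, ← dist_le_zero]
    refine le_of_forall_pos_le_add fun ε hε => ?_
    obtain ⟨N, hN⟩ := hGsmall ε hε
    have := closure_minimal (hN N le_rfl) isClosed_closedBall (hy N)
    rw [mem_closedBall] at this; linarith
  have hGfr : ∀ k, ∀ y ∈ Ω' ∩ frontier (f '' V k),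
      c * r k ≤ dist (g y) x ∧ dist (g y) x ≤ r k := by
    rintro k y ⟨hy, hyf⟩
    have hgy : ContinuousAt g y := hgc.continuousAt (hΩ'dom.1.mem_nhds hy)
    constructor
    · by_contra! hlt
      apply hyf.2
      rw [mem_interior_iff_mem_nhds]
      filter_upwards [hgy.preimage_mem_nhds (isOpen_ball.mem_nhds (mem_ball.2 hlt)),
        hΩ'dom.1.mem_nhds hy] with z hz hzΩ
      exact ⟨g z, hV1 k ⟨hz, hgm hzΩ⟩, hfg z hzΩ⟩
    · have h1 := hgy.continuousWithinAt.mem_closure_image hyf.1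
      have h2 : g '' (f '' V k) ⊆ closedBall x (r k) := by
        rintro _ ⟨_, ⟨z, hz, rfl⟩, rfl⟩
        rw [hgf z (hVΩ k hz)]
        exact ball_subset_closedBall (hV2 k hz).1
      exact closure_minimal h2 isClosed_closedBall h1
  have hGchain : IsChainIn Ω' (fun k => f '' V k) := by
    refine ⟨fun k => ⟨hΩ'bdd.subset (hGΩ k), hGconn k, hGΩ k, ?_, F x, hFcl _ (hVΩ k) (hxV k), hFfr⟩,
      fun k => image_mono ?_, fun k => ?_, ?_⟩
    · intro h
      have : f q ∈ f '' V k := (show f '' V k = Ω' from h).symm ▸ hfm hq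
      obtain ⟨z, hz, hzq⟩ := this
      have : z = q := by rw [← hgf z (hVΩ k hz), hzq, hgf q hq]
      subst this
      have h1 := mem_ball.1 (hV2 k hz).1
      linarith [hrle k]
    · intro z hz
      refine hV1 k ⟨ball_subset_ball ?_ (hV2 _ hz).1, (hV2 _ hz).2⟩
      rw [hrs]; nlinarith [hrpos k]
    · refine hkey _ _ inter_subset_left inter_subset_left (c / 2 * r k)
        (by have := hrpos k; positivity) ?_
      intro a ha b hb
      have h1 := (hGfr _ a ha).2
      have h2 := (hGfr _ b hb).1
      rw [hrs] at h1
      have := dist_triangle_left (g b) x (g a)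
      linarith
    · exact hGimp.trans (singleton_subset_iff.2 hFfr)
  have hdiv : ChainDivides (fun k => f '' V k) E := by
    intro k
    by_contra! hno
    refine (hE3 k).ne' (le_antisymm ?_ bot_le)
    refine ENNReal.le_of_forall_pos_le_add fun ε hε _ => ?_
    obtain ⟨N, hN⟩ := hGsmall ((ε : ℝ) / 2) (by positivity)
    have hN := hN N le_rfl
    have hmeet : (f '' V N ∩ E (k+1)).Nonempty := by
      obtain ⟨z, hz, hzd⟩ := Metric.mem_closure_iff.1 (hx (k+1)) (c * r N) (mul_pos hc0 (hrpos N))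
      refine ⟨f z, ⟨z, hV1 N ⟨by rwa [mem_ball, dist_comm], hgsub _ hz⟩, rfl⟩, ?_⟩
      rw [← hfgE]; exact mem_image_of_mem f hz
    obtain ⟨a, ha1, ha2⟩ := aux_frontier (hGconn N).isPreconnected hmeet
      (fun h => hno N (h.trans (hE2 k)))
    obtain ⟨b, hb1, hb2⟩ := aux_frontier (hGconn N).isPreconnected
      (hmeet.mono (inter_subset_inter_right _ (hE2 k))) (hno N)
    refine (iInf₂_le (f '' V N) ⟨hGΩ N, hGconn N, ⟨a, ha1, hGΩ N ha1, ha2⟩,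
      ⟨b, hb1, hGΩ N hb1, hb2⟩⟩).trans ?_
    rw [zero_add]
    refine Metric.ediam_le fun u hu v hv => ?_
    rw [edist_dist, ENNReal.ofReal_le_iff_le_toReal ENNReal.coe_ne_top]
    have h1 := mem_closedBall.1 (hN hu)
    have h2 := mem_closedBall.1 (hN hv)
    have := dist_triangle_right u v (F x)
    simp only [ENNReal.coe_toReal]
    linarith
  have hdiv2 := hprime _ hGchain hdiv
  refine ⟨F x, Subset.antisymm ?_ (singleton_subset_iff.2 (mem_iInter.2 hFimp))⟩
  refine Subset.trans ?_ hGimp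
  intro y hy
  refine mem_iInter.2 fun k => ?_
  obtain ⟨l, hl⟩ := hdiv2 k
  exact closure_mono hl (mem_iInter.1 hy l)

end
end
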